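/- Let p be a real number with 1 ≤ p < ∞. Let G : ℓ^m → ℓ^r be strictly causal and incrementally finite-gain ℓ_p-stable, and let K' : ℓ^r → ℓ^m be a causal base controller that is itself ℓ_p-stable as an operator and whose closed-loop map Φ_{G,K'} is ℓ_p-stable and incrementally finite-gain ℓ_p-stable. Then for every causal controller K'' : ℓ^r → ℓ^m whose closed-loop map Φ_{G,K''} is ℓ_p-stable, there exists a causal, ℓ_p-stable operator Q : ℓ^r → ℓ^m such that the controller K defined by K y := u°, with u° the unique solution of u° = K'(y) + Q(y − G u°), satisfies Φ_{G,K} = Φ_{G,K''}. -/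

import Mathlib

/-- Sequences with values in `ℝ^n` (with the Euclidean norm). -/
abbrev Traj (n : ℕ) : Type := ℕ → EuclideanSpace ℝ (Fin n)

/-- A causal operator on sequences. -/
def Causal {n m : ℕ} (A : Traj n → Traj m) : Prop :=
  ∀ (x x' : Traj n) (t : ℕ), (∀ s, s ≤ t → x s = x' s) → A x t = A x' t

/-- A strictly causal operator on sequences. -/
def StrictlyCausal {n m : ℕ} (A : Traj n → Traj m) : Prop :=
  ∀ (x x' : Traj n) (t : ℕ), (∀ s, s < t → x s = x' s) → A x t = A x' t

/-- Causal in the first argument, strictly causal in the second argument. -/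
def CausalSC {n q m : ℕ} (B : Traj n → Traj q → Traj m) : Prop :=
  ∀ (x x' : Traj n) (z z' : Traj q) (t : ℕ),
    (∀ s, s ≤ t → x s = x' s) → (∀ s, s < t → z s = z' s) → B x z t = B x' z' t

/-- Causal in both arguments. -/
def CausalCC {n q m : ℕ} (B : Traj n → Traj q → Traj m) : Prop :=
  ∀ (x x' : Traj n) (z z' : Traj q) (t : ℕ),
    (∀ s, s ≤ t → x s = x' s) → (∀ s, s ≤ t → z s = z' s) → B x z t = B x' z' t

/-- Strictly causal in both arguments. -/
def CausalSS {n q m : ℕ} (B : Traj n → Traj q → Traj m) : Prop :=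
  ∀ (x x' : Traj n) (z z' : Traj q) (t : ℕ),
    (∀ s, s < t → x s = x' s) → (∀ s, s < t → z s = z' s) → B x z t = B x' z' t

/-- Membership in `ℓ_p`: summability of `‖x t‖ ^ p`. -/
def InLp (p : ℝ) {E : Type*} [Norm E] (x : ℕ → E) : Prop :=
  Summable fun t => ‖x t‖ ^ p

/-- The `ℓ_p` norm `(∑ₜ ‖x t‖ ^ p) ^ (1/p)` of a sequence. -/
noncomputable def lpSeqNorm (p : ℝ) {E : Type*} [Norm E] (x : ℕ → E) : ℝ :=
  (∑' t, ‖x t‖ ^ p) ^ (1 / p)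

/-- The `ℝ^{r+m}`-valued sequence obtained by stacking `v` and `d`
(the norm of `(v t, d t)` is the Euclidean norm of the concatenated vector). -/
noncomputable def pairSeq {r m : ℕ} (v : Traj r) (d : Traj m) :
    ℕ → WithLp 2 (EuclideanSpace ℝ (Fin r) × EuclideanSpace ℝ (Fin m)) :=
  fun t => (WithLp.equiv 2 _).symm (v t, d t)

/-- An exponentially decaying sequence: `‖x t‖ ≤ k · α ^ t` with `k > 0`, `α ∈ (0,1)`. -/
def ExpDecay {E : Type*} [Norm E] (x : ℕ → E) : Prop :=
  ∃ k : ℝ, 0 < k ∧ ∃ α : ℝ, 0 < α ∧ α < 1 ∧ ∀ t, ‖x t‖ ≤ k * α ^ t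

/-!
The loop `u = K'' (G u + ω)` is strictly causal in `u`, so it has exactly one solution `U ω`, which
depends causally on `ω`. The parameter is `Q ω = U ω - K' (G (U ω) + ω)`, the part of the input
generated by `K''` which `K'` does not already supply; its stability is that of the loop and of
`K'`. For a measurement `y`, put `ω = y - G (K'' y)`: then `K'' y` solves the loop, hence is `U ω`,
and so `K'' y = K' y + Q (y - G (K'' y))`. The right-hand side is strictly causal as a function of
the input, so `K'' y` is its only fixed point and the architecture reproduces `K''`.
-/

open Function Set

theorem inLp_iff_memℓp {E : Type*} [NormedAddCommGroup E] {p : ℝ} (hp : 0 < p) {x : ℕ → E} :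
    InLp p x ↔ Memℓp x (ENNReal.ofReal p) := by
  have hp' : (ENNReal.ofReal p).toReal = p := ENNReal.toReal_ofReal hp.le
  rw [memℓp_gen_iff (hp'.symm ▸ hp), hp', InLp]

theorem inLp_zero {E : Type*} [NormedAddCommGroup E] {p : ℝ} (hp : 0 < p) :
    InLp p (0 : ℕ → E) :=
  (inLp_iff_memℓp hp).2 zero_memℓp

theorem InLp.sub {E : Type*} [NormedAddCommGroup E] {p : ℝ} (hp : 0 < p) {x y : ℕ → E}
    (hx : InLp p x) (hy : InLp p y) : InLp p (x - y) :=
  (inLp_iff_memℓp hp).2 (((inLp_iff_memℓp hp).1 hx).sub ((inLp_iff_memℓp hp).1 hy))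

section Causality

variable {ι E F H : Type*} [Preorder ι]

/-- Causality of an operator between signals over an arbitrary preorder of times, with arbitrary
values. On `Traj` it unfolds to `Causal`. -/
def IsCausal (A : (ι → E) → ι → F) : Prop :=
  ∀ x x' t, EqOn x x' (Iic t) → A x t = A x' t

/-- Strict causality of an operator between signals over an arbitrary preorder of times, with
arbitrary values. On `Traj` it unfolds to `StrictlyCausal`. -/
def IsStrictlyCausal (A : (ι → E) → ι → F) : Prop :=
  ∀ x x' t, EqOn x x' (Iio t) → A x t = A x' t

theorem IsCausal.eqOn_Iic {A : (ι → E) → ι → F} (hA : IsCausal A) {x x' : ι → E} {t : ι}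
    (h : EqOn x x' (Iic t)) : EqOn (A x) (A x') (Iic t) :=
  fun _ hs => hA _ _ _ (h.mono (Iic_subset_Iic.2 hs))

theorem IsStrictlyCausal.eqOn_Iic {A : (ι → E) → ι → F} (hA : IsStrictlyCausal A)
    {x x' : ι → E} {t : ι} (h : EqOn x x' (Iio t)) : EqOn (A x) (A x') (Iic t) :=
  fun _ hs => hA _ _ _ (h.mono (Iio_subset_Iio hs))

theorem IsStrictlyCausal.isCausal {A : (ι → E) → ι → F} (hA : IsStrictlyCausal A) : IsCausal A :=
  fun _ _ _ h => hA _ _ _ (h.mono Iio_subset_Iic_self)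

theorem IsCausal.comp_isStrictlyCausal {B : (ι → F) → ι → H} {A : (ι → E) → ι → F}
    (hB : IsCausal B) (hA : IsStrictlyCausal A) : IsStrictlyCausal fun x => B (A x) :=
  fun _ _ _ h => hB _ _ _ (hA.eqOn_Iic h)

theorem IsStrictlyCausal.eqOn_Iic_of_isFixedPt [WellFoundedLT ι] {Φ Ψ : (ι → E) → ι → E}
    (hΦ : IsStrictlyCausal Φ) {t : ι} (hΦΨ : ∀ u, EqOn (Φ u) (Ψ u) (Iic t)) {u v : ι → E}
    (hu : IsFixedPt Φ u) (hv : IsFixedPt Ψ v) : EqOn u v (Iic t) := by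
  intro s
  induction s using WellFoundedLT.induction with
  | ind s ih =>
    intro hs
    calc u s = Φ u s := congrFun hu.symm s
      _ = Φ v s := hΦ _ _ _ fun j hj => ih j hj (hj.le.trans hs)
      _ = Ψ v s := hΦΨ v hs
      _ = v s := congrFun hv s

theorem IsStrictlyCausal.eq_of_isFixedPt [WellFoundedLT ι] {Φ : (ι → E) → ι → E}
    (hΦ : IsStrictlyCausal Φ) {u v : ι → E} (hu : IsFixedPt Φ u) (hv : IsFixedPt Φ v) : u = v :=
  funext fun _ => hΦ.eqOn_Iic_of_isFixedPt (fun _ => eqOn_refl _ _) hu hv self_mem_Iic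

open scoped Classical in
/-- The fixed point of a strictly causal operator, computed by recursion on time. The value at `t`
is read off from a signal that has the correct past and is arbitrary from `t` on. -/
noncomputable def causalFix [WellFoundedLT ι] [Nonempty E] (Φ : (ι → E) → ι → E) : ι → E :=
  wellFounded_lt.fix fun t past =>
    Φ (fun s => if hs : s < t then past s hs else Classical.arbitrary E) t

theorem IsStrictlyCausal.isFixedPt_causalFix [WellFoundedLT ι] [Nonempty E]
    {Φ : (ι → E) → ι → E} (hΦ : IsStrictlyCausal Φ) : IsFixedPt Φ (causalFix Φ) := by
  funext t
  conv_rhs => rw [causalFix, WellFounded.fix_eq]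
  exact hΦ _ _ _ fun s hs => by rw [dif_pos (mem_Iio.1 hs), causalFix]

end Causality

section LoopInput

variable {ι E F : Type*} [Preorder ι] [Add E] {G : (ι → F) → ι → E} {K : (ι → E) → ι → F}

theorem IsStrictlyCausal.add_const (hG : IsStrictlyCausal G) (ω : ι → E) :
    IsStrictlyCausal fun u => G u + ω :=
  fun _ _ t h => congrArg (· + ω t) (hG _ _ t h)

theorem IsCausal.isStrictlyCausal_loop (hK : IsCausal K) (hG : IsStrictlyCausal G) (ω : ι → E) :
    IsStrictlyCausal fun u => K (G u + ω) :=
  hK.comp_isStrictlyCausal (hG.add_const ω)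

variable [WellFoundedLT ι] [Nonempty F]

/-- The plant input `u = K (G u + ω)` in the feedback loop of a strictly causal plant `G` and a
causal controller `K`, driven by the output disturbance `ω`. -/
noncomputable def loopInput (G : (ι → F) → ι → E) (K : (ι → E) → ι → F) (ω : ι → E) : ι → F :=
  causalFix fun u => K (G u + ω)

theorem isFixedPt_loopInput (hG : IsStrictlyCausal G) (hK : IsCausal K) (ω : ι → E) :
    IsFixedPt (fun u => K (G u + ω)) (loopInput G K ω) :=
  (hK.isStrictlyCausal_loop hG ω).isFixedPt_causalFix

theorem isCausal_loopInput (hG : IsStrictlyCausal G) (hK : IsCausal K) :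
    IsCausal (loopInput G K) := by
  intro ω ω' t hω
  have loops_agree (u : ι → F) : EqOn (K (G u + ω)) (K (G u + ω')) (Iic t) :=
    hK.eqOn_Iic fun s hs => congrArg (G u s + ·) (hω hs)
  exact (hK.isStrictlyCausal_loop hG ω).eqOn_Iic_of_isFixedPt loops_agree
    (isFixedPt_loopInput hG hK ω) (isFixedPt_loopInput hG hK ω') self_mem_Iic

end LoopInput

theorem IsCausal.isStrictlyCausal_architecture {ι E F : Type*} [Preorder ι] [Sub E] [Add F]
    {G : (ι → F) → ι → E} {Q : (ι → E) → ι → F} (hQ : IsCausal Q) (hG : IsStrictlyCausal G)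
    (y : ι → E) (w : ι → F) : IsStrictlyCausal fun u => w + Q (y - G u) :=
  fun _ _ t h => congrArg (w t + ·) <|
    hQ _ _ t fun s hs => congrArg (y s - ·) (hG.eqOn_Iic h hs)

section YoulaParameter

variable {ι E F : Type*} [Preorder ι] [WellFoundedLT ι] [AddCommGroup E]
  {G : (ι → F) → ι → E} {K K' K'' : (ι → E) → ι → F}

theorem loopInput_sub_apply [Nonempty F] (hG : IsStrictlyCausal G) (hK : IsCausal K) (y : ι → E) :
    loopInput G K (y - G (K y)) = K y :=
  (hK.isStrictlyCausal_loop hG _).eq_of_isFixedPt (isFixedPt_loopInput hG hK _)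
    (congrArg K (add_sub_cancel (G (K y)) y))

variable [AddCommGroup F]

/-- The parameter `Q` for which the architecture `u = K' y + Q (y - G u)` around the base controller
`K'` reproduces the controller `K''`. -/
noncomputable def youlaParameter (G : (ι → F) → ι → E) (K' K'' : (ι → E) → ι → F)
    (ω : ι → E) : ι → F :=
  loopInput G K'' ω - K' (G (loopInput G K'' ω) + ω)

theorem isCausal_youlaParameter (hG : IsStrictlyCausal G) (hK' : IsCausal K')
    (hK'' : IsCausal K'') : IsCausal (youlaParameter G K' K'') := by
  intro ω ω' t hω
  have inputs_agree : EqOn (loopInput G K'' ω) (loopInput G K'' ω') (Iic t) :=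
    (isCausal_loopInput hG hK'').eqOn_Iic hω
  have outputs_agree :
      EqOn (G (loopInput G K'' ω) + ω) (G (loopInput G K'' ω') + ω') (Iic t) :=
    fun s hs => congrArg₂ (· + ·) (hG.isCausal.eqOn_Iic inputs_agree hs) (hω hs)
  exact congrArg₂ (· - ·) (inputs_agree self_mem_Iic) (hK' _ _ _ outputs_agree)

theorem isFixedPt_youla_architecture (hG : IsStrictlyCausal G) (hK'' : IsCausal K'') (y : ι → E) :
    IsFixedPt (fun u => K' y + youlaParameter G K' K'' (y - G u)) (K'' y) := by
  simp only [IsFixedPt, youlaParameter, loopInput_sub_apply hG hK'', add_sub_cancel]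

theorem eq_youla_architecture_iff (hG : IsStrictlyCausal G) (hK' : IsCausal K')
    (hK'' : IsCausal K'') {y : ι → E} {u : ι → F} :
    u = K' y + youlaParameter G K' K'' (y - G u) ↔ u = K'' y := by
  have hK''y := isFixedPt_youla_architecture (K' := K') hG hK'' y
  constructor
  · intro hu
    have hQ := isCausal_youlaParameter hG hK' hK''
    exact (hQ.isStrictlyCausal_architecture hG y (K' y)).eq_of_isFixedPt hu.symm hK''y
  · rintro rfl
    exact hK''y.symm

end YoulaParameter

theorem statement13_general {E F : Type*} [NormedAddCommGroup E] [NormedAddCommGroup F]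
    {p : ℝ} (hp : 0 < p) {G : (ℕ → F) → ℕ → E} {K' K'' : (ℕ → E) → ℕ → F}
    (hG : IsStrictlyCausal G) (hK' : IsCausal K')
    (hK'stab : ∀ y, InLp p y → InLp p (K' y)) (hK'' : IsCausal K'')
    (hCL''stab : ∀ v y u, y = G u + v → u = K'' y → InLp p v → InLp p y ∧ InLp p u) :
    ∃ Q : (ℕ → E) → ℕ → F, IsCausal Q ∧ (∀ ω, InLp p ω → InLp p (Q ω)) ∧
      ∀ y u, u = K' y + Q (y - G u) ↔ u = K'' y := by
  refine ⟨youlaParameter G K' K'', isCausal_youlaParameter hG hK' hK'', fun ω hω => ?_,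
    fun y u => eq_youla_architecture_iff hG hK' hK''⟩
  obtain ⟨hy, hu⟩ := hCL''stab ω _ _ rfl (isFixedPt_loopInput hG hK'' ω).symm hω
  exact hu.sub hp (hK'stab _ hy)

/-- completeness — if the causal base controller `K'` is itself ℓ_p-stable
and its closed-loop map with the i.f.g. ℓ_p-stable strictly causal plant `G` is ℓ_p-stable
and i.f.g. ℓ_p-stable, then every causal ℓ_p-stabilizing controller `K''` is realized by
the architecture `u° = K'(y) + Q(y − G u°)` for some causal ℓ_p-stable `Q`. -/
theorem statement13 {r m : ℕ} (p : ℝ) (hp : 1 ≤ p)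
    (G : Traj m → Traj r) (K' : Traj r → Traj m) (K'' : Traj r → Traj m)
    (hG : StrictlyCausal G)
    (hGifg : ∃ γ : ℝ, 0 ≤ γ ∧ ∀ u₁ u₂ : Traj m, InLp p u₁ → InLp p u₂ →
      lpSeqNorm p (G u₁ - G u₂) ≤ γ * lpSeqNorm p (u₁ - u₂))
    (hK' : Causal K')
    -- K' is itself ℓ_p-stable as an operator
    (hK'stab : ∀ y : Traj r, InLp p y → InLp p (K' y))
    -- the closed-loop map of G and K' is ℓ_p-stable
    (hCL'stab : ∀ (v : Traj r) (d : Traj m) (y : Traj r) (u : Traj m),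
      y = G u + v → u = K' y + d → InLp p v → InLp p d → InLp p y ∧ InLp p u)
    -- the closed-loop map of G and K' is incrementally finite-gain ℓ_p-stable
    (hCL'ifg : ∃ γ : ℝ, 0 ≤ γ ∧
      ∀ (v₁ v₂ : Traj r) (d₁ d₂ : Traj m) (y₁ y₂ : Traj r) (u₁ u₂ : Traj m),
        y₁ = G u₁ + v₁ → u₁ = K' y₁ + d₁ →
        y₂ = G u₂ + v₂ → u₂ = K' y₂ + d₂ →
        InLp p v₁ → InLp p d₁ → InLp p v₂ → InLp p d₂ →
        lpSeqNorm p (pairSeq y₁ u₁ - pairSeq y₂ u₂)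
          ≤ γ * lpSeqNorm p (pairSeq v₁ d₁ - pairSeq v₂ d₂))
    (hK'' : Causal K'')
    -- the closed-loop map of G and K'' is ℓ_p-stable
    (hCL''stab : ∀ (v : Traj r) (d : Traj m) (y : Traj r) (u : Traj m),
      y = G u + v → u = K'' y + d → InLp p v → InLp p d → InLp p y ∧ InLp p u) :
    ∃ (Q : Traj r → Traj m) (K : Traj r → Traj m),
      Causal Q ∧
      (∀ ω : Traj r, InLp p ω → InLp p (Q ω)) ∧
      -- K y := u°, the unique solution of u° = K'(y) + Q(y − G u°)
      (∀ (y : Traj r) (u0 : Traj m), u0 = K' y + Q (y - G u0) → K y = u0) ∧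
      -- Φ_{G,K} = Φ_{G,K''}: the closed-loop solutions coincide
      (∀ (v : Traj r) (d : Traj m) (y : Traj r) (u : Traj m),
        y = G u + v → u = K y + d → u = K'' y + d) := by
  have hp₀ : 0 < p := zero_lt_one.trans_le hp
  obtain ⟨Q, hQ, hQstab, hiff⟩ := statement13_general hp₀ hG hK' hK'stab hK'' fun v y u hy hu hv =>
    hCL''stab v 0 y u hy (hu.trans (add_zero _).symm) hv (inLp_zero hp₀)
  exact ⟨Q, K'', hQ, hQstab, fun y u hu => ((hiff y u).1 hu).symm, fun _ _ _ _ _ hu => hu⟩
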